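/- If π : E → F is a homomorphism of *-trings between C*-ternary rings E and F, then the image π(E) is a closed subspace of F. -/

import Mathlib

noncomputable section

open scoped ComplexConjugate

/-- The axioms of a `*`-ternary ring (`*`-tring) structure on a complex vector
space: `μ` is linear in the odd variables, conjugate-linear in the middle one,
and satisfies the ternary associativity identities. -/
def IsTernaryProduct {E : Type*} [AddCommGroup E] [Module ℂ E]
    (μ : E → E → E → E) : Prop :=
  (∀ x x' y z : E, μ (x + x') y z = μ x y z + μ x' y z) ∧
  (∀ (c : ℂ) (x y z : E), μ (c • x) y z = c • μ x y z) ∧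
  (∀ x y y' z : E, μ x (y + y') z = μ x y z + μ x y' z) ∧
  (∀ (c : ℂ) (x y z : E), μ x (c • y) z = conj c • μ x y z) ∧
  (∀ x y z z' : E, μ x y (z + z') = μ x y z + μ x y z') ∧
  (∀ (c : ℂ) (x y z : E), μ x y (c • z) = c • μ x y z) ∧
  (∀ x y z u v : E, μ (μ x y z) u v = μ x (μ u z y) v) ∧
  (∀ x y z u v : E, μ x (μ u z y) v = μ x y (μ z u v))

/-- The norm of a Banach space `E` is a `C*`-norm for the ternary product `μ`,
making `E` a `C*`-ternary ring. -/
def IsCStarTringNorm {E : Type*} [NormedAddCommGroup E] [Module ℂ E]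
    (μ : E → E → E → E) : Prop :=
  (∀ x y z : E, ‖μ x y z‖ ≤ ‖x‖ * ‖y‖ * ‖z‖) ∧ (∀ x : E, ‖μ x x x‖ = ‖x‖ ^ 3)

/-!
The bounded operators on a C*-ternary ring `E` that are adjointable for `μ` form a C*-algebra. It
contains `x ⊗ y* = μ(x, y, ·)`, and `‖x ⊗ x*‖ = ‖x‖²`. A quasi-inverse of `x ⊗ y*` is again of the
form `w ⊗ y*`, where `w` solves two equations in `E`; a homomorphism `π` preserves these equations,
hence shrinks the quasispectrum of `x ⊗ x*` and is contractive.

By continuity `π (f(x ⊗ x*) x) = f(π x ⊗ (π x)*) (π x)` for continuous `f : ℝ → ℝ`. Let `f` be `1`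
on `[-‖π x‖², ‖π x‖²]` and decay like `‖π x‖ / √|t|` outside. Then `f(x ⊗ x*) x` has the same image
as `x` and norm at most `‖π x‖`. So every point of `π(E)` has a preimage of no greater norm, and
completeness of `E` makes `π(E)` closed.
-/

section Intertwiners

variable {A B E F : Type*} [AddCommGroup E] [Module ℂ E] [AddCommGroup F] [Module ℂ F]

/-- The algebra of pairs `(a, b)` whose actions on `E` and `F` satisfy `π ∘ a = b ∘ π`. -/
def intertwiners (A B : Type*) [Ring A] [Algebra ℂ A] [Module A E] [IsScalarTower ℂ A E]
    [Ring B] [Algebra ℂ B] [Module B F] [IsScalarTower ℂ B F] (π : E →ₗ[ℂ] F) :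
    Subalgebra ℂ (A × B) where
  carrier := {p | ∀ z, π (p.1 • z) = p.2 • π z}
  mul_mem' {p q} hp hq z := by
    rw [Prod.fst_mul, Prod.snd_mul, mul_smul, mul_smul, hp, hq]
  add_mem' {p q} hp hq z := by
    rw [Prod.fst_add, Prod.snd_add, add_smul, add_smul, map_add, hp, hq]
  algebraMap_mem' c z := by
    rw [Prod.algebraMap_apply, algebraMap_smul, algebraMap_smul, map_smul]

lemma isClosed_intertwiners [NormedRing A] [NormedAlgebra ℂ A] [Module A E] [IsScalarTower ℂ A E]
    [NormedRing B] [NormedAlgebra ℂ B] [Module B F] [IsScalarTower ℂ B F]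
    [TopologicalSpace E] [ContinuousSMul A E] [TopologicalSpace F] [T2Space F]
    [ContinuousSMul B F] {π : E →ₗ[ℂ] F} (hπ : Continuous π) :
    IsClosed (intertwiners A B π : Set (A × B)) := by
  change IsClosed {p : A × B | ∀ z, π (p.1 • z) = p.2 • π z}
  simp only [Set.ofPred_forall]
  exact isClosed_iInter fun z => isClosed_eq (by fun_prop) (by fun_prop)

-- The functional calculus of `(a, b)` stays in the closed `*`-algebra of pairs that intertwine
-- together with their adjoints.
lemma map_cfc_smul [CStarAlgebra A] [Module A E] [IsScalarTower ℂ A E]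
    [CStarAlgebra B] [Module B F] [IsScalarTower ℂ B F]
    [TopologicalSpace E] [ContinuousSMul A E] [TopologicalSpace F] [T2Space F]
    [ContinuousSMul B F] {π : E →ₗ[ℂ] F} (hπ : Continuous π) {a : A} {b : B}
    (ha : IsSelfAdjoint a) (hb : IsSelfAdjoint b) (hab : ∀ z, π (a • z) = b • π z)
    {f : ℝ → ℝ} (hf : Continuous f) (z : E) : π (cfc f a • z) = cfc f b • π z := by
  let S : StarSubalgebra ℂ (A × B) :=
    { toSubalgebra := intertwiners A B π ⊓ star (intertwiners A B π)
      star_mem' := fun ⟨hp, hp'⟩ => ⟨hp', by simpa using hp⟩ }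
  have hS : IsClosed (S : Set (A × B)) :=
    (isClosed_intertwiners hπ).inter ((isClosed_intertwiners hπ).preimage continuous_star)
  have hab_star : IsSelfAdjoint (a, b) := Prod.ext ha hb
  have mem : (a, b) ∈ S := ⟨hab, by
    change star (a, b) ∈ intertwiners A B π
    rw [hab_star.star_eq]
    exact hab⟩
  -- Instance search does not identify the two real algebra structures on `A × B`.
  have : ContinuousFunctionalCalculus ℝ (A × B) IsSelfAdjoint :=
    IsSelfAdjoint.instContinuousFunctionalCalculus
  have cfc_mem_S : cfc f (a, b) ∈ S := cfc_mem f mem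
  rw [cfc_map_prod (S := ℂ) f a b hf.continuousOn hab_star] at cfc_mem_S
  exact cfc_mem_S.1 z

end Intertwiners

lemma exists_continuous_truncation {m : ℝ} (hm : 0 < m) :
    ∃ f : ℝ → ℝ, Continuous f ∧ (∀ t, |t| ≤ m ^ 2 → f t = 1) ∧ ∀ t, |t| * f t ^ 2 ≤ m ^ 2 := by
  have hpos (t : ℝ) : 0 < max m √|t| := lt_max_of_lt_left hm
  refine ⟨fun t => m / max m √|t|, ?_, fun t ht => ?_, fun t => ?_⟩
  · exact Continuous.div (by fun_prop) (by fun_prop) fun t => (hpos t).ne'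
  · dsimp only
    rw [max_eq_left (Real.sqrt_le_iff.2 ⟨hm.le, ht⟩), div_self hm.ne']
  · have hle : |t| ≤ max m √|t| ^ 2 := (Real.sqrt_le_left (hpos t).le).1 (le_max_right _ _)
    rw [div_pow, mul_div_left_comm]
    exact mul_le_of_le_one_right (sq_nonneg m) (div_le_one_of_le₀ hle (sq_nonneg _))

lemma isClosed_range_of_exists_map_eq_norm_le {G H : Type*} [NormedAddCommGroup G]
    [CompleteSpace G] [NormedAddCommGroup H] (f : NormedAddGroupHom G H) {C : ℝ} (hC : 0 < C)
    (hf : ∀ x, ∃ x', f x' = f x ∧ ‖x'‖ ≤ C * ‖f x‖) : IsClosed (Set.range f) := by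
  have hsurj : f.SurjectiveOnWith f.range C := by
    rintro _ ⟨x, rfl⟩
    exact hf x
  refine isClosed_of_closure_subset fun y hy => ?_
  obtain ⟨x, hx, -⟩ := controlled_closure_of_complete hC one_pos hsurj y hy
  exact ⟨x, hx⟩

namespace IsTernaryProduct

variable {E : Type*} [AddCommGroup E] [Module ℂ E] {μ : E → E → E → E}

lemma add_left (h : IsTernaryProduct μ) (x x' y z : E) : μ (x + x') y z = μ x y z + μ x' y z :=
  h.1 x x' y z

lemma smul_left (h : IsTernaryProduct μ) (c : ℂ) (x y z : E) : μ (c • x) y z = c • μ x y z :=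
  h.2.1 c x y z

lemma add_middle (h : IsTernaryProduct μ) (x y y' z : E) : μ x (y + y') z = μ x y z + μ x y' z :=
  h.2.2.1 x y y' z

lemma smul_middle (h : IsTernaryProduct μ) (c : ℂ) (x y z : E) :
    μ x (c • y) z = conj c • μ x y z :=
  h.2.2.2.1 c x y z

lemma add_right (h : IsTernaryProduct μ) (x y z z' : E) : μ x y (z + z') = μ x y z + μ x y z' :=
  h.2.2.2.2.1 x y z z'

lemma smul_right (h : IsTernaryProduct μ) (c : ℂ) (x y z : E) : μ x y (c • z) = c • μ x y z :=
  h.2.2.2.2.2.1 c x y z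

lemma assoc_left (h : IsTernaryProduct μ) (x y z u v : E) :
    μ (μ x y z) u v = μ x (μ u z y) v :=
  h.2.2.2.2.2.2.1 x y z u v

lemma assoc_right (h : IsTernaryProduct μ) (x y z u v : E) :
    μ x (μ u z y) v = μ x y (μ z u v) :=
  h.2.2.2.2.2.2.2 x y z u v

lemma assoc (h : IsTernaryProduct μ) (x y z u v : E) : μ (μ x y z) u v = μ x y (μ z u v) :=
  (h.assoc_left x y z u v).trans (h.assoc_right x y z u v)

lemma sub_middle (h : IsTernaryProduct μ) (x y y' z : E) : μ x (y - y') z = μ x y z - μ x y' z :=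
  (AddMonoidHom.mk' (μ x · z) fun y y' => h.add_middle x y y' z).map_sub y y'

lemma sub_right (h : IsTernaryProduct μ) (x y z z' : E) : μ x y (z - z') = μ x y z - μ x y z' :=
  (AddMonoidHom.mk' (μ x y) (h.add_right x y)).map_sub z z'

end IsTernaryProduct

/-- A `C*`-ternary ring structure: a ternary product for which the norm of `E` is a `C*`-norm.
Completeness of `E` is not part of this predicate. -/
structure IsCStarTring {E : Type*} [NormedAddCommGroup E] [NormedSpace ℂ E]
    (μ : E → E → E → E) : Prop where
  isTernaryProduct : IsTernaryProduct μ
  isCStarTringNorm : IsCStarTringNorm μ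

/-- `S` is an adjoint of `T` for the ternary product `μ`, which plays the role of an inner product.
Only one of the two adjunction identities is required; see `IsTernaryAdjoint.symm`. -/
def IsTernaryAdjoint {E : Type*} [NormedAddCommGroup E] [NormedSpace ℂ E] (μ : E → E → E → E)
    (T S : E →L[ℂ] E) : Prop :=
  ∀ a b c, μ a (T b) c = μ a b (S c)

namespace IsCStarTring

variable {E : Type*} [NormedAddCommGroup E] [NormedSpace ℂ E] {μ : E → E → E → E}
  (h : IsCStarTring μ)
include h

lemma norm_le (x y z : E) : ‖μ x y z‖ ≤ ‖x‖ * ‖y‖ * ‖z‖ := h.isCStarTringNorm.1 x y z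

lemma norm_self (x : E) : ‖μ x x x‖ = ‖x‖ ^ 3 := h.isCStarTringNorm.2 x

lemma eq_zero_of_self_eq_zero {x : E} (hx : μ x x x = 0) : x = 0 := by
  simpa [hx] using (h.norm_self x).symm

lemma ext_middle {y y' : E} (H : ∀ a c, μ a y c = μ a y' c) : y = y' := by
  refine sub_eq_zero.1 (h.eq_zero_of_self_eq_zero ?_)
  rw [h.isTernaryProduct.sub_middle, H, sub_self]

lemma ext_right {z z' : E} (H : ∀ a b, μ a b z = μ a b z') : z = z' := by
  refine sub_eq_zero.1 (h.eq_zero_of_self_eq_zero ?_)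
  rw [h.isTernaryProduct.sub_right, H, sub_self]

lemma continuous_middle (x z : E) : Continuous fun y => μ x y z :=
  AddMonoidHomClass.continuous_of_bound
    (AddMonoidHom.mk' (μ x · z) fun y y' => h.isTernaryProduct.add_middle x y y' z)
    (‖x‖ * ‖z‖) fun y => (h.norm_le x y z).trans_eq (mul_right_comm _ _ _)

lemma continuous_right (x y : E) : Continuous (μ x y) :=
  AddMonoidHomClass.continuous_of_bound
    (AddMonoidHom.mk' (μ x y) (h.isTernaryProduct.add_right x y)) (‖x‖ * ‖y‖) (h.norm_le x y)

end IsCStarTring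

namespace IsTernaryAdjoint

variable {E : Type*} [NormedAddCommGroup E] [NormedSpace ℂ E] {μ : E → E → E → E}
  {T S T' S' : E →L[ℂ] E}

protected lemma one : IsTernaryAdjoint μ 1 1 := fun _ _ _ => rfl

lemma mul (H : IsTernaryAdjoint μ T S) (H' : IsTernaryAdjoint μ T' S') :
    IsTernaryAdjoint μ (T * T') (S' * S) := fun a b c => by
  simp only [mul_apply_eq_comp, H a, H' a]

lemma right_unique (h : IsCStarTring μ) (H : IsTernaryAdjoint μ T S)
    (H' : IsTernaryAdjoint μ T S') : S = S' :=
  ContinuousLinearMap.ext fun c => h.ext_right fun a b => by rw [← H, ← H']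

lemma symm (h : IsCStarTring μ) (H : IsTernaryAdjoint μ T S) : IsTernaryAdjoint μ S T := by
  have ht := h.isTernaryProduct
  refine fun a b c => h.ext_middle fun x v => ?_
  calc μ x (μ a (S b) c) v = μ (μ x c (S b)) a v := (ht.assoc_left x c (S b) a v).symm
    _ = μ (μ x (T c) b) a v := by rw [H]
    _ = μ x (μ a b (T c)) v := ht.assoc_left x (T c) b a v

lemma add (h : IsTernaryProduct μ) (H : IsTernaryAdjoint μ T S)
    (H' : IsTernaryAdjoint μ T' S') : IsTernaryAdjoint μ (T + T') (S + S') := fun a b c => by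
  simp only [add_apply, h.add_middle, h.add_right, H a, H' a]

lemma smul (h : IsTernaryProduct μ) (H : IsTernaryAdjoint μ T S) (k : ℂ) :
    IsTernaryAdjoint μ (k • T) (conj k • S) := fun a b c => by
  simp only [smul_apply, h.smul_middle, h.smul_right, H a]

lemma norm_apply_sq_le (h : IsCStarTring μ) (H : IsTernaryAdjoint μ T S) (z : E) :
    ‖T z‖ ^ 2 ≤ ‖S * T‖ * ‖z‖ ^ 2 := by
  rcases (norm_nonneg (T z)).eq_or_lt with h0 | hpos
  · rw [← h0, zero_pow two_ne_zero]
    positivity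
  refine le_of_mul_le_mul_left ?_ hpos
  calc ‖T z‖ * ‖T z‖ ^ 2 = ‖μ (T z) z ((S * T) z)‖ := by
        rw [← pow_succ', ← h.norm_self, H, mul_apply_eq_comp]
    _ ≤ ‖T z‖ * ‖z‖ * (‖S * T‖ * ‖z‖) := by grw [h.norm_le, (S * T).le_opNorm z]
    _ = ‖T z‖ * (‖S * T‖ * ‖z‖ ^ 2) := by ring

lemma norm_mul_self_le (h : IsCStarTring μ) (H : IsTernaryAdjoint μ T S) :
    ‖T‖ * ‖T‖ ≤ ‖S * T‖ := by
  have hT : ‖T‖ ≤ √‖S * T‖ := T.opNorm_le_bound (Real.sqrt_nonneg _) fun z => by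
    rw [← Real.sqrt_sq (norm_nonneg z), ← Real.sqrt_mul (norm_nonneg _)]
    exact Real.le_sqrt_of_sq_le (H.norm_apply_sq_le h z)
  calc ‖T‖ * ‖T‖ ≤ √‖S * T‖ * √‖S * T‖ := by gcongr
    _ = ‖S * T‖ := Real.mul_self_sqrt (norm_nonneg _)

end IsTernaryAdjoint

namespace IsCStarTring

variable {E : Type*} [NormedAddCommGroup E] [NormedSpace ℂ E] {μ : E → E → E → E}

/-- The unital `C*`-algebra of bounded operators on `E` that have an adjoint for `μ`.
It depends on the proof `h` so that its `C*`-structure can be found by instance search. -/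
def adjointable (h : IsCStarTring μ) : Subalgebra ℂ (E →L[ℂ] E) where
  carrier := {T | ∃ S, IsTernaryAdjoint μ T S}
  mul_mem' := fun ⟨_, H⟩ ⟨_, H'⟩ => ⟨_, H.mul H'⟩
  add_mem' := fun ⟨_, H⟩ ⟨_, H'⟩ => ⟨_, H.add h.isTernaryProduct H'⟩
  algebraMap_mem' c := by
    rw [Algebra.algebraMap_eq_smul_one]
    exact ⟨_, IsTernaryAdjoint.one.smul h.isTernaryProduct c⟩

variable (h : IsCStarTring μ)

-- Instance search would otherwise reach the norm along a path that does not unify with `StarRing`.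
instance : NormedRing h.adjointable := Subalgebra.normedRing h.adjointable

instance : IsScalarTower ℂ h.adjointable E := ⟨fun _ _ _ => rfl⟩

instance : ContinuousSMul h.adjointable E where
  continuous_smul := by
    change Continuous fun p : h.adjointable × E => (p.1 : E →L[ℂ] E) p.2
    fun_prop

instance : Star h.adjointable where
  star T := ⟨T.2.choose, _, T.2.choose_spec.symm h⟩

lemma isTernaryAdjoint_star (T : h.adjointable) :
    IsTernaryAdjoint μ (T : E →L[ℂ] E) (star T : h.adjointable) :=
  T.2.choose_spec

variable {h} in
lemma star_eq_of_isTernaryAdjoint {T S : h.adjointable}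
    (H : IsTernaryAdjoint μ (T : E →L[ℂ] E) S) : star T = S :=
  Subtype.ext ((h.isTernaryAdjoint_star T).right_unique h H)

instance : StarRing h.adjointable where
  star_involutive T := star_eq_of_isTernaryAdjoint ((h.isTernaryAdjoint_star T).symm h)
  star_mul S T :=
    star_eq_of_isTernaryAdjoint ((h.isTernaryAdjoint_star S).mul (h.isTernaryAdjoint_star T))
  star_add S T := star_eq_of_isTernaryAdjoint
    ((h.isTernaryAdjoint_star S).add h.isTernaryProduct (h.isTernaryAdjoint_star T))

instance : StarModule ℂ h.adjointable where
  star_smul c T :=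
    star_eq_of_isTernaryAdjoint ((h.isTernaryAdjoint_star T).smul h.isTernaryProduct c)

instance : CStarRing h.adjointable where
  norm_mul_self_le T := (h.isTernaryAdjoint_star T).norm_mul_self_le h

include h in
lemma isClosed_setOf_isTernaryAdjoint :
    IsClosed {p : (E →L[ℂ] E) × (E →L[ℂ] E) | IsTernaryAdjoint μ p.1 p.2} := by
  simp only [IsTernaryAdjoint, Set.ofPred_forall]
  refine isClosed_iInter fun a => isClosed_iInter fun b => isClosed_iInter fun c => ?_
  exact isClosed_eq ((h.continuous_middle a c).comp (by fun_prop))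
    ((h.continuous_right a b).comp (by fun_prop))

/-- The graph embedding of the adjoint operation, used to see that `h.adjointable` is complete. -/
def adjointPair (T : h.adjointable) : (E →L[ℂ] E) × (E →L[ℂ] E) :=
  (T, (star T : h.adjointable))

lemma isometry_adjointPair : Isometry h.adjointPair :=
  Isometry.of_dist_eq fun S T =>
    (congrArg (max (dist S T)) (star_isometry.dist_eq S T)).trans (max_self _)

lemma range_adjointPair : Set.range h.adjointPair = {p | IsTernaryAdjoint μ p.1 p.2} := by
  ext ⟨T, S⟩
  constructor
  · rintro ⟨T, hT⟩
    cases hT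
    exact h.isTernaryAdjoint_star T
  · intro H
    exact ⟨⟨T, S, H⟩, Prod.ext rfl ((h.isTernaryAdjoint_star ⟨T, S, H⟩).right_unique h H)⟩

instance [CompleteSpace E] : CompleteSpace h.adjointable := by
  refine h.isometry_adjointPair.isUniformInducing.completeSpace ?_
  rw [range_adjointPair]
  exact h.isClosed_setOf_isTernaryAdjoint.isComplete

instance [CompleteSpace E] : CStarAlgebra h.adjointable where

variable {h} in
lemma norm_smul_le (T : h.adjointable) (z : E) : ‖T • z‖ ≤ ‖T‖ * ‖z‖ :=
  (T : E →L[ℂ] E).le_opNorm z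

variable {h} in
lemma adjointable_ext {S T : h.adjointable} (H : ∀ z : E, S • z = T • z) : S = T :=
  Subtype.ext (ContinuousLinearMap.ext H)

/-- The bounded operator `z ↦ μ x y z`. -/
def leftMulCLM (x y : E) : E →L[ℂ] E :=
  LinearMap.mkContinuous
    { toFun := μ x y
      map_add' := h.isTernaryProduct.add_right x y
      map_smul' := fun c z => h.isTernaryProduct.smul_right c x y z }
    (‖x‖ * ‖y‖) (h.norm_le x y)

lemma isTernaryAdjoint_leftMulCLM (x y : E) :
    IsTernaryAdjoint μ (h.leftMulCLM x y) (h.leftMulCLM y x) :=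
  fun a b c => h.isTernaryProduct.assoc_right a b y x c

/-- The operator `z ↦ μ x y z` as an element of the `C*`-algebra of adjointable operators; it plays
the role of the rank-one operator `x ⊗ y*`. -/
def leftMul (x y : E) : h.adjointable :=
  ⟨h.leftMulCLM x y, h.leftMulCLM y x, h.isTernaryAdjoint_leftMulCLM x y⟩

lemma leftMul_apply (x y z : E) : h.leftMul x y • z = μ x y z := rfl

lemma norm_leftMul_le (x y : E) : ‖h.leftMul x y‖ ≤ ‖x‖ * ‖y‖ :=
  LinearMap.mkContinuous_norm_le _ (by positivity) (h.norm_le x y)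

lemma leftMul_add_left (x x' y : E) :
    h.leftMul (x + x') y = h.leftMul x y + h.leftMul x' y :=
  adjointable_ext fun z => h.isTernaryProduct.add_left x x' y z

lemma leftMul_smul_left (c : ℂ) (x y : E) : h.leftMul (c • x) y = c • h.leftMul x y :=
  adjointable_ext fun z => h.isTernaryProduct.smul_left c x y z

lemma leftMul_zero_left (y : E) : h.leftMul 0 y = 0 := by
  simpa only [zero_smul] using h.leftMul_smul_left 0 0 y

lemma leftMul_neg_left (x y : E) : h.leftMul (-x) y = -h.leftMul x y := by
  simpa only [neg_one_smul] using h.leftMul_smul_left (-1) x y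

lemma star_leftMul (x y : E) : star (h.leftMul x y) = h.leftMul y x :=
  star_eq_of_isTernaryAdjoint (h.isTernaryAdjoint_leftMulCLM x y)

lemma isSelfAdjoint_leftMul_self (x : E) : IsSelfAdjoint (h.leftMul x x) := h.star_leftMul x x

lemma mul_leftMul (T : h.adjointable) (x y : E) : T * h.leftMul x y = h.leftMul (T • x) y := by
  have ht := h.isTernaryProduct
  have hT (a b c : E) : μ a (star T • b) c = μ a b (T • c) :=
    (h.isTernaryAdjoint_star T).symm h a b c
  refine adjointable_ext fun z => h.ext_right fun a b => ?_
  calc μ a b (T • μ x y z) = μ (μ a (star T • b) x) y z := by rw [← hT, ht.assoc]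
    _ = μ a b (μ (T • x) y z) := by rw [hT, ht.assoc]

lemma leftMul_smul_smul (T : h.adjointable) (x y : E) :
    h.leftMul (T • x) (T • y) = T * h.leftMul x y * star T := by
  rw [← h.star_leftMul, ← h.mul_leftMul, star_mul, h.star_leftMul, ← h.mul_leftMul, mul_assoc]

lemma norm_leftMul_self (x : E) : ‖h.leftMul x x‖ = ‖x‖ ^ 2 := by
  apply le_antisymm
  · rw [sq]
    exact h.norm_leftMul_le x x
  rcases (norm_nonneg x).eq_or_lt with h0 | hpos
  · rw [← h0, zero_pow two_ne_zero]
    positivity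
  refine le_of_mul_le_mul_right ?_ hpos
  calc ‖x‖ ^ 2 * ‖x‖ = ‖h.leftMul x x • x‖ := by rw [← pow_succ, leftMul_apply, h.norm_self]
    _ ≤ ‖h.leftMul x x‖ * ‖x‖ := norm_smul_le _ _

-- The quasi-inverse `R` of `leftMul x y` satisfies `R = -(leftMul x y + R * leftMul x y)`, so it is
-- again of the form `leftMul w y`.
lemma isQuasiregular_leftMul_iff (x y : E) :
    IsQuasiregular (h.leftMul x y) ↔ ∃ w, w + x + μ x y w = 0 ∧ x + w + μ w y x = 0 := by
  rw [isQuasiregular_iff]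
  constructor
  · rintro ⟨R, hRl, hRr⟩
    have hR : R = h.leftMul (-(x + R • x)) y := by
      rw [leftMul_neg_left, leftMul_add_left, ← mul_leftMul, eq_neg_iff_add_eq_zero, ← hRr]
      abel
    refine ⟨-(x + R • x), ?_, ?_⟩
    · rw [← leftMul_apply h x y]
      have hRx : (R + h.leftMul x y + h.leftMul x y * R) • x = 0 := by rw [hRl, zero_smul]
      rw [add_smul, add_smul, mul_smul] at hRx
      rw [← neg_eq_zero, ← hRx, smul_neg, smul_add]
      abel
    · rw [← leftMul_apply h _ y, ← hR]
      abel
  · rintro ⟨w, hwl, hwr⟩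
    refine ⟨h.leftMul w y, ?_, ?_⟩
    · rw [mul_leftMul, leftMul_apply, ← leftMul_add_left, ← leftMul_add_left, hwl,
        leftMul_zero_left]
    · rw [mul_leftMul, leftMul_apply, ← leftMul_add_left, ← leftMul_add_left, hwr,
        leftMul_zero_left]

section FunctionalCalculus

variable [CompleteSpace E]

lemma abs_le_norm_sq_of_mem_spectrum_leftMul {x : E} {t : ℝ} (ht : t ∈ spectrum ℝ (h.leftMul x x)) :
    |t| ≤ ‖x‖ ^ 2 := by
  rw [← h.norm_leftMul_self]
  exact IsometricContinuousFunctionalCalculus.norm_spectrum_le _ ht (h.isSelfAdjoint_leftMul_self x)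

lemma leftMul_cfc_smul_self {f : ℝ → ℝ} (hf : Continuous f) (x : E) :
    h.leftMul (cfc f (h.leftMul x x) • x) (cfc f (h.leftMul x x) • x) =
      cfc (fun t => f t * t * f t) (h.leftMul x x) := by
  have hx := h.isSelfAdjoint_leftMul_self x
  rw [cfc_mul (fun t => f t * t) f _, cfc_mul f (fun t => t) _, cfc_id' ℝ _, leftMul_smul_smul,
    (cfc_predicate f (h.leftMul x x)).star_eq]

lemma norm_cfc_smul_self_le {f : ℝ → ℝ} (hf : Continuous f) {c : ℝ} (hc : 0 ≤ c)
    (hfc : ∀ t, |t| * f t ^ 2 ≤ c ^ 2) (x : E) : ‖cfc f (h.leftMul x x) • x‖ ≤ c := by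
  rw [← sq_le_sq₀ (norm_nonneg _) hc, ← h.norm_leftMul_self, h.leftMul_cfc_smul_self hf]
  refine norm_cfc_le (sq_nonneg c) fun t _ => ?_
  calc ‖f t * t * f t‖ = |t| * f t ^ 2 := by
        rw [← sq_abs (f t), Real.norm_eq_abs, abs_mul, abs_mul]
        ring
    _ ≤ c ^ 2 := hfc t

end FunctionalCalculus

section Homomorphism

variable {F : Type*} [NormedAddCommGroup F] [NormedSpace ℂ F] {ν : F → F → F → F} {π : E →ₗ[ℂ] F}
  (hν : IsCStarTring ν) (hπ : ∀ x y z : E, π (μ x y z) = ν (π x) (π y) (π z))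
include hπ

lemma isQuasiregular_leftMul_map {x y : E} (hxy : IsQuasiregular (h.leftMul x y)) :
    IsQuasiregular (hν.leftMul (π x) (π y)) := by
  rw [isQuasiregular_leftMul_iff] at hxy ⊢
  obtain ⟨w, hwl, hwr⟩ := hxy
  refine ⟨π w, ?_, ?_⟩
  · rw [← hπ, ← map_add, ← map_add, hwl, map_zero]
  · rw [← hπ, ← map_add, ← map_add, hwr, map_zero]

lemma quasispectrum_leftMul_map_subset (x y : E) :
    quasispectrum ℂ (hν.leftMul (π x) (π y)) ⊆ quasispectrum ℂ (h.leftMul x y) := by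
  intro r hr hu hxy
  refine hr hu ?_
  rw [Units.smul_def, ← leftMul_smul_left, ← leftMul_neg_left] at hxy ⊢
  rw [← map_smul, ← map_neg]
  exact h.isQuasiregular_leftMul_map hν hπ hxy

variable [CompleteSpace E] [CompleteSpace F]
include h hν

lemma norm_map_le (x : E) : ‖π x‖ ≤ ‖x‖ := by
  rw [← sq_le_sq₀ (norm_nonneg _) (norm_nonneg _), ← h.norm_leftMul_self, ← hν.norm_leftMul_self]
  have hx := (h.isSelfAdjoint_leftMul_self x).isStarNormal
  have hπx := (hν.isSelfAdjoint_leftMul_self (π x)).isStarNormal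
  open NonUnitalIsometricContinuousFunctionalCalculus in
  exact (isGreatest_norm_quasispectrum (𝕜 := ℂ) _ hπx).mono (isGreatest_norm_quasispectrum _ hx)
    (Set.image_mono (h.quasispectrum_leftMul_map_subset hν hπ x x))

lemma continuous_of_map_ternary : Continuous π :=
  AddMonoidHomClass.continuous_of_bound π 1 fun x => by
    rw [one_mul]
    exact h.norm_map_le hν hπ x

lemma map_cfc_leftMul_smul {f : ℝ → ℝ} (hf : Continuous f) (x z : E) :
    π (cfc f (h.leftMul x x) • z) = cfc f (hν.leftMul (π x) (π x)) • π z :=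
  map_cfc_smul (h.continuous_of_map_ternary hν hπ) (h.isSelfAdjoint_leftMul_self x)
    (hν.isSelfAdjoint_leftMul_self (π x)) (hπ x x) hf z

-- `f` is `1` on the spectrum of `leftMul (π x) (π x)`, so replacing `x` by `f (leftMul x x) • x`
-- does not change the image, while it cuts the norm down to `‖π x‖`.
lemma exists_map_eq_norm_le (x : E) : ∃ x', π x' = π x ∧ ‖x'‖ ≤ ‖π x‖ := by
  rcases (norm_nonneg (π x)).eq_or_lt with h0 | hpos
  · exact ⟨0, by rw [map_zero, norm_eq_zero.1 h0.symm], by rw [norm_zero, ← h0]⟩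
  obtain ⟨f, hf, hf_one, hf_bound⟩ := exists_continuous_truncation hpos
  have hcfc : cfc f (hν.leftMul (π x) (π x)) = 1 := by
    rw [← cfc_const_one ℝ _ (hν.isSelfAdjoint_leftMul_self (π x))]
    exact cfc_congr fun t ht => hf_one t (hν.abs_le_norm_sq_of_mem_spectrum_leftMul ht)
  refine ⟨cfc f (h.leftMul x x) • x, ?_, h.norm_cfc_smul_self_le hf hpos.le hf_bound x⟩
  rw [h.map_cfc_leftMul_smul hν hπ hf, hcfc, one_smul]

end Homomorphism

end IsCStarTring

/-- If `π : E → F` is a homomorphism of `*`-trings between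
`C*`-ternary rings `E` and `F`, then the image `π(E)` is closed in `F`. -/
theorem stmt_16 {E F : Type*}
    [NormedAddCommGroup E] [NormedSpace ℂ E] [CompleteSpace E]
    [NormedAddCommGroup F] [NormedSpace ℂ F] [CompleteSpace F]
    (μE : E → E → E → E) (μF : F → F → F → F)
    (hE : IsTernaryProduct μE) (hF : IsTernaryProduct μF)
    (hnE : IsCStarTringNorm μE) (hnF : IsCStarTringNorm μF)
    (π : E →ₗ[ℂ] F)
    (hπ : ∀ x y z : E, π (μE x y z) = μF (π x) (π y) (π z)) :
    IsClosed (Set.range π) := by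
  have hE' : IsCStarTring μE := ⟨hE, hnE⟩
  have hF' : IsCStarTring μF := ⟨hF, hnF⟩
  let f : NormedAddGroupHom E F := π.toAddMonoidHom.mkNormedAddGroupHom 1 fun x => by
    rw [one_mul]
    exact hE'.norm_map_le hF' hπ x
  refine isClosed_range_of_exists_map_eq_norm_le f one_pos fun x => ?_
  obtain ⟨x', hx', hnorm⟩ := hE'.exists_map_eq_norm_le hF' hπ x
  exact ⟨x', hx', by rwa [one_mul]⟩
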